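/- Let q be an odd prime power and let n be a positive integer coprime to q, written n = 2^m · n' with n' odd and m ≥ 0. Let r be the positive integer such that 2^r exactly divides q + 1 (i.e., 2^r | q+1 and 2^{r+1} ∤ q+1). Then the number of SCRIM factors of x^n − 1 over F_{q^2} satisfies |Ω_{q^2,n}| = 2^m · |Ω_{q^2,n'}| if 0 ≤ m ≤ r, and |Ω_{q^2,n}| = 2^r · |Ω_{q^2,n'}| if m > r. In particular, if n' = 1 then |Ω_{q^2,n'}| = 1, so |Ω_{q^2,2^m}| = 2^m if 0 ≤ m ≤ r and |Ω_{q^2,2^m}| = 2^r if m > r. -/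

import Mathlib

open Polynomial

/-- The reciprocal polynomial `f*(x) = x^(deg f) * f(0)⁻¹ * f(1/x)`. -/
noncomputable def crecip {F : Type*} [Field F] (f : F[X]) : F[X] :=
  C (f.coeff 0)⁻¹ * f.reverse

/-- The conjugate-reciprocal polynomial `f†`, obtained by applying the
conjugation `a ↦ a ^ q` to each coefficient of `f*`. -/
noncomputable def cdagger {F : Type*} [Field F] (q : ℕ) (f : F[X]) : F[X] :=
  (crecip f).sum fun i a => C (a ^ q) * X ^ i

/-- A polynomial is SCRIM if it is monic, irreducible, and self-conjugate-reciprocal. -/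
def IsSCRIM {F : Type*} [Field F] (q : ℕ) (f : F[X]) : Prop :=
  f.Monic ∧ Irreducible f ∧ f = cdagger q f

/-- The set `Ω_{q²,n}` of SCRIM factors of `x^n - 1` over `F = F_{q²}`. -/
def scrimFactors (F : Type*) [Field F] (q n : ℕ) : Set F[X] :=
  {f | IsSCRIM q f ∧ f ∣ X ^ n - 1}

/-!
Over the algebraic closure, the minimal polynomial of `α ≠ 0` has as conjugate-reciprocal the
minimal polynomial of `α^(-q)`, so it is SCRIM exactly when `α^(-q)` is a Frobenius conjugate of
`α`, i.e. when `α^(q^k + 1) = 1` for some odd `k`. For `a` and `n` coprime, write such a root of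
`x^(a n) - 1` as `α = ζ β` with `ζ^a = 1` and `β^n = 1`. If `a` is a power of two, the order `d`
of `ζ` divides not only `q^k + 1` but `q + 1`: from `(-q)^k = 1` with `k` odd in the 2-group of
units modulo `d` it follows that `-q = 1`. Hence `ζ` is one of the `gcd(a, q + 1)` solutions of
`ζ^gcd(a, q + 1) = 1` in the base field, and scaling the roots of `f` by `ζ` maps the pairs `(ζ,
f)` with `f ∈ Ω_{q²,n}` bijectively onto `Ω_{q²,a n}`.
-/

section CoprimePowers

theorem exists_pow_mul_pow_eq_of_coprime {M : Type*} [Monoid M] {a b : ℕ} {x : M}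
    (hab : a.Coprime b) (hx : x ^ (a * b) = 1) :
    ∃ i j : ℕ, x ^ i * x ^ j = x ∧ (x ^ i) ^ a = 1 ∧ (x ^ j) ^ b = 1 := by
  obtain ⟨i, hia, hib⟩ := Nat.chineseRemainder hab 1 0
  obtain ⟨j, hja, hjb⟩ := Nat.chineseRemainder hab 0 1
  have hij : i + j ≡ 1 [MOD a * b] :=
    (Nat.modEq_and_modEq_iff_modEq_mul hab).1 ⟨hia.add hja, hib.add hjb⟩
  obtain ⟨s, rfl⟩ := Nat.modEq_zero_iff_dvd.1 hib
  obtain ⟨t, rfl⟩ := Nat.modEq_zero_iff_dvd.1 hja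
  refine ⟨b * s, a * t, ?_, ?_, ?_⟩
  · rw [← pow_add, pow_eq_pow_mod _ hx, hij, ← pow_eq_pow_mod _ hx, pow_one]
  · rw [← pow_mul, show b * s * a = a * b * s by ring, pow_mul, hx, one_pow]
  · rw [← pow_mul, show a * t * b = a * b * t by ring, pow_mul, hx, one_pow]

theorem eq_of_pow_eq_pow_of_coprime {G₀ : Type*} [CommGroupWithZero G₀] {a b : ℕ} {x y : G₀}
    (hab : a.Coprime b) (hy : y ≠ 0) (ha : x ^ a = y ^ a) (hb : x ^ b = y ^ b) : x = y := by
  have hdiv : ∀ n, x ^ n = y ^ n → (x / y) ^ n = 1 := fun n h ↦ by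
    rw [div_pow, h, div_self (pow_ne_zero n hy)]
  exact (div_eq_one_iff_eq hy).1 <|
    (pow_eq_one_iff_of_coprime hab).1 ⟨hdiv a ha, hdiv b hb⟩

theorem dvd_add_one_of_dvd_pow_add_one {d k q : ℕ} (hk : Odd k) (hkd : k.Coprime d.totient)
    (h : d ∣ q ^ k + 1) : d ∣ q + 1 := by
  rw [← ZMod.natCast_eq_zero_iff] at h ⊢
  have hpow : (-q : ZMod d) ^ k = 1 := by
    rw [hk.neg_pow, neg_eq_iff_add_eq_zero]
    exact_mod_cast h
  obtain ⟨u, hu⟩ : IsUnit (-q : ZMod d) := IsUnit.of_pow_eq_one hpow hk.pos.ne'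
  have hu_one : u = 1 :=
    (pow_eq_one_iff_of_coprime hkd).1 ⟨Units.ext (by simpa [hu] using hpow), ZMod.pow_totient u⟩
  have hq : (-q : ZMod d) = 1 := by rw [← hu, hu_one, Units.val_one]
  push_cast
  rw [← hq, add_neg_cancel]

theorem gcd_two_pow_pow_add_one_dvd_add_one {k : ℕ} (m q : ℕ) (hk : Odd k) :
    (2 ^ m).gcd (q ^ k + 1) ∣ q + 1 := by
  obtain ⟨j, -, hj⟩ := (Nat.dvd_prime_pow Nat.prime_two).1 (Nat.gcd_dvd_left (2 ^ m) (q ^ k + 1))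
  rw [hj]
  refine dvd_add_one_of_dvd_pow_add_one hk ?_ (hj ▸ Nat.gcd_dvd_right _ _)
  obtain rfl | hj0 := j.eq_zero_or_pos
  · simp
  · simpa [Nat.totient_prime_pow Nat.prime_two hj0] using hk.coprime_two_right.pow_right (j - 1)

theorem gcd_prime_pow_eq_of_le {p m r N : ℕ} (hp : p.Prime) (hrm : r ≤ m) (h : p ^ r ∣ N)
    (h' : ¬ p ^ (r + 1) ∣ N) : (p ^ m).gcd N = p ^ r := by
  obtain ⟨j, -, hj⟩ := (Nat.dvd_prime_pow hp).1 (Nat.gcd_dvd_left (p ^ m) N)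
  have hjr : j ≤ r := by
    by_contra! hrj
    exact h' ((pow_dvd_pow p hrj).trans (hj ▸ Nat.gcd_dvd_right _ _))
  exact Nat.dvd_antisymm (hj ▸ pow_dvd_pow p hjr) (Nat.dvd_gcd (pow_dvd_pow p hrm) h)

end CoprimePowers

section FiniteField

variable {F K : Type*} [Field F] [Fintype F] [Field K] [Algebra F K]

theorem exists_isPrimitiveRoot_of_dvd_card_sub_one {d : ℕ} (hd : d ∣ Fintype.card F - 1) :
    ∃ ζ : F, IsPrimitiveRoot ζ d := by
  obtain ⟨g, hg⟩ := IsCyclic.exists_ofOrder_eq_natCard (α := Fˣ)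
  rw [Nat.card_units, Nat.card_eq_fintype_card] at hg
  obtain ⟨c, hc⟩ := hd
  have hpos : 0 < orderOf g := orderOf_pos g
  exact ⟨_, ((IsPrimitiveRoot.orderOf g).pow hpos (by rw [hg, hc, mul_comm])).map_of_injective
    (f := Units.coeHom F) Units.val_injective⟩

theorem exists_ringHom_eq_pow_of_card_eq_pow {q s : ℕ} (hs : s ≠ 0)
    (hF : Fintype.card F = q ^ s) (R : Type*) [CommRing R] [Nontrivial R] [Algebra F R] :
    ∃ τ : R →+* R, ∀ x, τ x = x ^ q := by
  obtain ⟨p, _, n, hp, hn⟩ := FiniteField.card' F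
  obtain ⟨e, -, rfl⟩ : ∃ e ≤ (n : ℕ), q = p ^ e :=
    (Nat.dvd_prime_pow hp).1 (hn ▸ hF ▸ dvd_pow_self q hs)
  have : ExpChar F p := .prime hp
  have : ExpChar R p := expChar_of_injective_algebraMap (algebraMap F R).injective p
  exact ⟨iterateFrobenius R p e, iterateFrobenius_def p e⟩

theorem minpoly_pow_card_pow (α : K) (i : ℕ) :
    minpoly F (α ^ Fintype.card F ^ i) = minpoly F α := by
  have h := minpoly.algHom_eq (FiniteField.frobeniusAlgHom F K ^ i) (RingHom.injective _) α
  rwa [AlgHom.coe_pow, FiniteField.coe_frobeniusAlgHom, pow_iterate] at h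

theorem minpoly_eq_minpoly_iff_exists_eq_pow [Algebra.IsAlgebraic F K] {α β : K} :
    minpoly F α = minpoly F β ↔ ∃ i, α = β ^ Fintype.card F ^ i := by
  refine ⟨fun h ↦ ?_, ?_⟩
  · let E := IntermediateField.adjoin F {α, β}
    have : FiniteDimensional F E :=
      IntermediateField.finiteDimensional_adjoin fun x _ ↦ Algebra.IsIntegral.isIntegral x
    have : Finite E := Module.finite_of_finite F
    let α' : E := ⟨α, IntermediateField.subset_adjoin F _ (by simp)⟩
    let β' : E := ⟨β, IntermediateField.subset_adjoin F _ (by simp)⟩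
    have h' : minpoly F α' = minpoly F β' := by
      rw [← minpoly.algebraMap_eq (algebraMap E K).injective α',
        ← minpoly.algebraMap_eq (algebraMap E K).injective β']
      exact h
    obtain ⟨g, hg⟩ := Normal.minpoly_eq_iff_mem_orbit E |>.1 h'
    obtain ⟨i, rfl⟩ := (FiniteField.bijective_frobeniusAlgEquivOfAlgebraic_pow F E).2 g
    refine ⟨i, ?_⟩
    have hα' : β' ^ Fintype.card F ^ (i : ℕ) = α' := by
      simpa [AlgEquiv.smul_def, AlgEquiv.coe_pow, pow_iterate,
        FiniteField.coe_frobeniusAlgEquivOfAlgebraic] using hg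
    exact congrArg (algebraMap E K) hα'.symm
  · rintro ⟨i, rfl⟩
    exact minpoly_pow_card_pow β i

end FiniteField

section Dagger

variable {F : Type*} [Field F] {q : ℕ} {f : F[X]}

theorem monic_crecip (hf : f.coeff 0 ≠ 0) : (crecip f).Monic := by
  rw [crecip, Monic, leadingCoeff_mul, leadingCoeff_C, reverse_leadingCoeff, trailingCoeff,
    natTrailingDegree_eq_zero.2 (Or.inr hf), inv_mul_cancel₀ hf]

theorem natDegree_crecip (hf : f.coeff 0 ≠ 0) : (crecip f).natDegree = f.natDegree := by
  rw [crecip, natDegree_C_mul (inv_ne_zero hf), reverse_natDegree,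
    natTrailingDegree_eq_zero.2 (Or.inr hf), Nat.sub_zero]

theorem eval₂_inv_crecip_eq_zero {K : Type*} [Field K] {φ : F →+* K} {x : K} (hx : x ≠ 0)
    (h : eval₂ φ x f = 0) : eval₂ φ x⁻¹ (crecip f) = 0 := by
  let _ := invertibleOfNonzero hx
  rw [crecip, eval₂_mul, ← invOf_eq_inv, (eval₂_reverse_eq_zero_iff φ x f).2 h, mul_zero]

theorem cdagger_eq_map_crecip {σ : F →+* F} (hσ : ∀ a, σ a = a ^ q) (f : F[X]) :
    cdagger q f = (crecip f).map σ := by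
  simp only [cdagger, Polynomial.map, eval₂_eq_sum, RingHom.comp_apply, hσ]

theorem IsSCRIM.coeff_zero_ne_zero (hf : IsSCRIM q f) : f.coeff 0 ≠ 0 := by
  intro h0
  have hcrecip : crecip f = 0 := by rw [crecip, h0, inv_zero, C_0, zero_mul]
  apply hf.1.ne_zero
  rw [hf.2.2, cdagger, hcrecip, sum_zero_index]

end Dagger

section Roots

variable {F K : Type*} [Field F] [Fintype F] [Field K] [Algebra F K] {q n : ℕ}

theorem aeval_inv_pow_cdagger_eq_zero (hF : Fintype.card F = q ^ 2) {f : F[X]} {α : K}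
    (hα : α ≠ 0) (hf : aeval α f = 0) : aeval (α⁻¹ ^ q) (cdagger q f) = 0 := by
  obtain ⟨σ, hσ⟩ := exists_ringHom_eq_pow_of_card_eq_pow two_ne_zero hF F
  obtain ⟨τ, hτ⟩ := exists_ringHom_eq_pow_of_card_eq_pow two_ne_zero hF K
  have hcomm : (algebraMap F K).comp σ = τ.comp (algebraMap F K) := by
    ext a
    simp only [RingHom.comp_apply, hσ, hτ, map_pow]
  rw [cdagger_eq_map_crecip hσ, aeval_def, eval₂_map, ← hτ, hcomm, ← hom_eval₂,
    eval₂_inv_crecip_eq_zero hα (aeval_def α f ▸ hf), map_zero]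

variable [Algebra.IsAlgebraic F K]

theorem cdagger_minpoly (hF : Fintype.card F = q ^ 2) {α : K} (hα : α ≠ 0) :
    cdagger q (minpoly F α) = minpoly F (α⁻¹ ^ q) := by
  obtain ⟨σ, hσ⟩ := exists_ringHom_eq_pow_of_card_eq_pow two_ne_zero hF F
  have hint (β : K) : IsIntegral F β := Algebra.IsIntegral.isIntegral β
  have hcoeff {β : K} (hβ : β ≠ 0) := minpoly.coeff_zero_ne_zero (hint β) hβ
  have hmonic {β : K} (hβ : β ≠ 0) : (cdagger q (minpoly F β)).Monic :=
    cdagger_eq_map_crecip hσ (minpoly F β) ▸ (monic_crecip (hcoeff hβ)).map σ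
  have hdeg {β : K} (hβ : β ≠ 0) :
      (cdagger q (minpoly F β)).natDegree = (minpoly F β).natDegree := by
    rw [cdagger_eq_map_crecip hσ, natDegree_map, natDegree_crecip (hcoeff hβ)]
  have hdvd {β : K} (hβ : β ≠ 0) : minpoly F (β⁻¹ ^ q) ∣ cdagger q (minpoly F β) :=
    minpoly.dvd F _ (aeval_inv_pow_cdagger_eq_zero hF hβ (minpoly.aeval F β))
  have hle {β : K} (hβ : β ≠ 0) :
      (minpoly F (β⁻¹ ^ q)).natDegree ≤ (minpoly F β).natDegree :=
    hdeg hβ ▸ natDegree_le_of_dvd (hdvd hβ) (hmonic hβ).ne_zero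
  -- Applying `β ↦ β⁻¹ ^ q` twice gives the Frobenius conjugate `α ^ q ^ 2`, so both degrees agree.
  have htwice : minpoly F ((α⁻¹ ^ q)⁻¹ ^ q) = minpoly F α := by
    rw [← inv_pow, inv_inv, ← pow_mul, ← sq, ← hF]
    simpa only [pow_one] using minpoly_pow_card_pow α 1
  refine eq_of_monic_of_dvd_of_natDegree_le (minpoly.monic (hint _)) (hmonic hα) (hdvd hα) ?_
  rw [hdeg hα, ← htwice]
  exact hle (pow_ne_zero q (inv_ne_zero hα))

theorem isSCRIM_minpoly_iff (hF : Fintype.card F = q ^ 2) {α : K} :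
    IsSCRIM q (minpoly F α) ↔ ∃ k, Odd k ∧ α ^ (q ^ k + 1) = 1 := by
  have hint : IsIntegral F α := Algebra.IsIntegral.isIntegral α
  obtain rfl | hα := eq_or_ne α 0
  · refine iff_of_false (fun h ↦ h.coeff_zero_ne_zero ?_) ?_
    · rw [minpoly.zero, coeff_X_zero]
    · simp
  calc IsSCRIM q (minpoly F α)
    _ ↔ minpoly F α = minpoly F (α⁻¹ ^ q) := by
      simp only [IsSCRIM, minpoly.monic hint, minpoly.irreducible hint, cdagger_minpoly hF hα,
        true_and]
    _ ↔ ∃ i, α = (α⁻¹ ^ q) ^ (q ^ 2) ^ i := by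
      rw [minpoly_eq_minpoly_iff_exists_eq_pow, hF]
    _ ↔ ∃ i, α ^ (q ^ (2 * i + 1) + 1) = 1 := by
      refine exists_congr fun i ↦ ?_
      rw [← pow_mul, inv_pow, ← mul_eq_one_iff_eq_inv₀ (pow_ne_zero _ hα), ← pow_succ', ← pow_mul,
        ← pow_succ']
    _ ↔ ∃ k, Odd k ∧ α ^ (q ^ k + 1) = 1 :=
      ⟨fun ⟨i, hi⟩ ↦ ⟨_, odd_two_mul_add_one i, hi⟩, fun ⟨_, ⟨i, hk⟩, hi⟩ ↦ ⟨i, hk ▸ hi⟩⟩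

/-- The roots in `K` of the SCRIM factors of `x^n - 1` over the field of order `q²`: the `n`-th
roots of unity whose order divides `q^k + 1` for some odd `k`. -/
def scrimRoots (K : Type*) [Monoid K] (q n : ℕ) : Set K :=
  {α | α ^ n = 1 ∧ ∃ k, Odd k ∧ α ^ (q ^ k + 1) = 1}

theorem scrimFactors_eq_image_minpoly [IsAlgClosed K] (hF : Fintype.card F = q ^ 2) :
    scrimFactors F q n = minpoly F '' scrimRoots K q n := by
  have dvd_iff (α : K) : minpoly F α ∣ X ^ n - 1 ↔ α ^ n = 1 := by
    rw [minpoly.dvd_iff, map_sub, map_pow, aeval_X, map_one, sub_eq_zero]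
  ext f
  constructor
  · rintro ⟨hf, hdvd⟩
    obtain ⟨α, hα⟩ := IsAlgClosed.exists_aeval_eq_zero K f hf.2.1.degree_pos.ne'
    obtain rfl : f = minpoly F α := minpoly.eq_of_irreducible_of_monic hf.2.1 hα hf.1
    exact ⟨α, ⟨(dvd_iff α).1 hdvd, (isSCRIM_minpoly_iff hF).1 hf⟩, rfl⟩
  · rintro ⟨α, ⟨hα, hk⟩, rfl⟩
    exact ⟨(isSCRIM_minpoly_iff hF).2 hk, (dvd_iff α).2 hα⟩

end Roots

section Counting

variable {q a n : ℕ}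

theorem mul_mem_scrimRoots {M : Type*} [CommMonoid M] {ζ β : M}
    (hζ : ζ ^ a.gcd (q + 1) = 1) (hβ : β ∈ scrimRoots M q n) :
    ζ * β ∈ scrimRoots M q (a * n) := by
  obtain ⟨hn, k, hk, hβk⟩ := hβ
  have hζ_of_dvd {e : ℕ} (he : a.gcd (q + 1) ∣ e) : ζ ^ e = 1 := by
    obtain ⟨c, rfl⟩ := he
    rw [pow_mul, hζ, one_pow]
  have hqk : q + 1 ∣ q ^ k + 1 := by simpa only [one_pow] using hk.nat_add_dvd_pow_add_pow q 1
  refine ⟨?_, k, hk, ?_⟩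
  · rw [mul_pow, hζ_of_dvd ((Nat.gcd_dvd_left _ _).mul_right n), one_mul, mul_comm, pow_mul, hn,
      one_pow]
  · rw [mul_pow, hζ_of_dvd ((Nat.gcd_dvd_right _ _).trans hqk), one_mul, hβk]

theorem exists_mul_eq_of_mem_scrimRoots {M : Type*} [Monoid M] {α : M} (han : a.Coprime n)
    (ha : ∀ k, Odd k → a.gcd (q ^ k + 1) ∣ q + 1) (hα : α ∈ scrimRoots M q (a * n)) :
    ∃ ζ β : M, ζ ^ a.gcd (q + 1) = 1 ∧ β ∈ scrimRoots M q n ∧ ζ * β = α := by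
  obtain ⟨han', k, hk, hαk⟩ := hα
  obtain ⟨i, j, hij, hi, hj⟩ := exists_pow_mul_pow_eq_of_coprime han han'
  have hpow (l : ℕ) : (α ^ l) ^ (q ^ k + 1) = 1 := by rw [pow_right_comm, hαk, one_pow]
  refine ⟨α ^ i, α ^ j, ?_, ⟨hj, k, hk, hpow j⟩, hij⟩
  have hgcd : orderOf (α ^ i) ∣ a.gcd (q ^ k + 1) :=
    Nat.dvd_gcd (orderOf_dvd_of_pow_eq_one hi) (orderOf_dvd_of_pow_eq_one (hpow i))
  exact orderOf_dvd_iff_pow_eq_one.1 <|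
    Nat.dvd_gcd (orderOf_dvd_of_pow_eq_one hi) (hgcd.trans (ha k hk))

theorem minpoly_smul_inj {F K : Type*} [Field F] [Finite F] [Field K] [Algebra F K]
    [Algebra.IsAlgebraic F K] {d : ℕ} {c c' : F} {β β' : K} (hdn : d.Coprime n) (hc' : c' ≠ 0)
    (hcd : c ^ d = c' ^ d) (hβ : β ^ n = 1) (hβ' : β' ^ n = 1)
    (h : minpoly F (c • β) = minpoly F (c' • β')) :
    c = c' ∧ minpoly F β = minpoly F β' := by
  have := Fintype.ofFinite F
  obtain ⟨i, hi⟩ := minpoly_eq_minpoly_iff_exists_eq_pow.1 h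
  rw [_root_.smul_pow, FiniteField.pow_card_pow] at hi
  have hcn : c ^ n = c' ^ n := by
    apply smul_left_injective F (one_ne_zero (α := K))
    simpa only [_root_.smul_pow, hβ, pow_right_comm, hβ', one_pow] using congrArg (· ^ n) hi
  obtain rfl := eq_of_pow_eq_pow_of_coprime hdn hc' hcd hcn
  rw [smul_right_injective K hc' hi]
  exact ⟨rfl, minpoly_pow_card_pow β' i⟩

variable {F : Type*} [Field F] [Fintype F]

theorem bijOn_scaleRoots_scrimFactors (hF : Fintype.card F = q ^ 2) {ζ : F}
    (hζ : IsPrimitiveRoot ζ (a.gcd (q + 1))) (han : a.Coprime n)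
    (ha : ∀ k, Odd k → a.gcd (q ^ k + 1) ∣ q + 1) :
    Set.BijOn (fun p : F × F[X] ↦ p.2.scaleRoots p.1)
      ((nthRootsFinset (a.gcd (q + 1)) (1 : F) : Set F) ×ˢ scrimFactors F q n)
      (scrimFactors F q (a * n)) := by
  let K := AlgebraicClosure F
  have hd : 0 < a.gcd (q + 1) := Nat.gcd_pos_of_pos_right a q.succ_pos
  have hmem {c : F} : c ∈ (nthRootsFinset (a.gcd (q + 1)) (1 : F) : Set F) ↔
      c ^ a.gcd (q + 1) = 1 := by rw [Finset.mem_coe, mem_nthRootsFinset hd]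
  have hne {c : F} (hc : c ^ a.gcd (q + 1) = 1) : c ≠ 0 :=
    (IsUnit.of_pow_eq_one hc hd.ne').ne_zero
  have hscale {c : F} (hc : c ^ a.gcd (q + 1) = 1) (β : K) :
      (minpoly F β).scaleRoots c = minpoly F (c • β) :=
    (IsIntegrallyClosed.minpoly_smul (hne hc) (Algebra.IsIntegral.isIntegral β)).symm
  simp only [scrimFactors_eq_image_minpoly (K := K) hF]
  refine ⟨?mapsTo, ?injOn, ?surjOn⟩
  case mapsTo =>
    rintro ⟨c, _⟩ ⟨hc, β, hβ, rfl⟩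
    rw [hmem] at hc
    refine ⟨c • β, ?_, (hscale hc β).symm⟩
    rw [Algebra.smul_def]
    exact mul_mem_scrimRoots (by rw [← map_pow, hc, map_one]) hβ
  case injOn =>
    rintro ⟨c, _⟩ ⟨hc, β, hβ, rfl⟩ ⟨c', _⟩ ⟨hc', β', hβ', rfl⟩ h
    rw [hmem] at hc hc'
    simp only [hscale hc, hscale hc'] at h
    exact Prod.ext_iff.2 <| minpoly_smul_inj (han.coprime_dvd_left (Nat.gcd_dvd_left _ _))
      (hne hc') (hc.trans hc'.symm) hβ.1 hβ'.1 h
  case surjOn =>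
    rintro _ ⟨α, hα, rfl⟩
    obtain ⟨η, β, hη, hβ, rfl⟩ := exists_mul_eq_of_mem_scrimRoots han ha hα
    have : NeZero (a.gcd (q + 1)) := ⟨hd.ne'⟩
    obtain ⟨i, -, rfl⟩ :=
      (hζ.map_of_injective (algebraMap F K).injective).eq_pow_of_pow_eq_one hη
    have hc : (ζ ^ i) ^ a.gcd (q + 1) = 1 := by rw [pow_right_comm, hζ.pow_eq_one, one_pow]
    refine ⟨(ζ ^ i, minpoly F β), ⟨hmem.2 hc, β, hβ, rfl⟩, ?_⟩
    simp only [hscale hc, Algebra.smul_def, map_pow]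

theorem ncard_scrimFactors_mul (hF : Fintype.card F = q ^ 2) (han : a.Coprime n)
    (ha : ∀ k, Odd k → a.gcd (q ^ k + 1) ∣ q + 1) :
    (scrimFactors F q (a * n)).ncard = a.gcd (q + 1) * (scrimFactors F q n).ncard := by
  have hdvd : a.gcd (q + 1) ∣ Fintype.card F - 1 := by
    rw [hF, ← one_pow 2, Nat.sq_sub_sq]
    exact (Nat.gcd_dvd_right _ _).mul_right _
  obtain ⟨ζ, hζ⟩ := exists_isPrimitiveRoot_of_dvd_card_sub_one hdvd
  rw [← (bijOn_scaleRoots_scrimFactors hF hζ han ha).image_eq,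
    (bijOn_scaleRoots_scrimFactors hF hζ han ha).injOn.ncard_image, Set.ncard_prod,
    Set.ncard_coe_finset, hζ.card_nthRootsFinset]

theorem ncard_scrimFactors_one (hF : Fintype.card F = q ^ 2) :
    (scrimFactors F q 1).ncard = 1 := by
  have hroots : scrimRoots (AlgebraicClosure F) q 1 = {1} := by
    ext α
    simp only [scrimRoots, pow_one, Set.mem_ofPred_eq, Set.mem_singleton_iff, and_iff_left_iff_imp]
    rintro rfl
    exact ⟨1, odd_one, one_pow _⟩
  rw [scrimFactors_eq_image_minpoly (K := AlgebraicClosure F) hF, hroots, Set.image_singleton,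
    Set.ncard_singleton]

end Counting

theorem stmt6_general {q m n' r : ℕ} {F : Type*} [Field F] [Fintype F]
    (hF : Fintype.card F = q ^ 2) (hn' : Odd n')
    (hr1 : 2 ^ r ∣ q + 1) (hr2 : ¬ 2 ^ (r + 1) ∣ q + 1) :
    (m ≤ r →
      (scrimFactors F q (2 ^ m * n')).ncard = 2 ^ m * (scrimFactors F q n').ncard) ∧
    (r < m →
      (scrimFactors F q (2 ^ m * n')).ncard = 2 ^ r * (scrimFactors F q n').ncard) ∧
    (n' = 1 → (scrimFactors F q n').ncard = 1) := by
  have hcount := ncard_scrimFactors_mul hF (hn'.coprime_two_left.pow_left m) fun _ hk ↦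
    gcd_two_pow_pow_add_one_dvd_add_one m q hk
  refine ⟨fun hmr ↦ ?_, fun hrm ↦ ?_, ?_⟩
  · rwa [Nat.gcd_eq_left ((pow_dvd_pow 2 hmr).trans hr1)] at hcount
  · rwa [gcd_prime_pow_eq_of_le Nat.prime_two hrm.le hr1 hr2] at hcount
  · rintro rfl
    exact ncard_scrimFactors_one hF

theorem stmt6 {q m n' r : ℕ} (hq : IsPrimePow q) (hqodd : Odd q)
    {F : Type*} [Field F] [Fintype F] (hF : Fintype.card F = q ^ 2)
    (hn' : Odd n') (hgcd : Nat.Coprime (2 ^ m * n') q)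
    (hr : 0 < r) (hr1 : 2 ^ r ∣ q + 1) (hr2 : ¬ 2 ^ (r + 1) ∣ q + 1) :
    (m ≤ r →
      (scrimFactors F q (2 ^ m * n')).ncard = 2 ^ m * (scrimFactors F q n').ncard) ∧
    (r < m →
      (scrimFactors F q (2 ^ m * n')).ncard = 2 ^ r * (scrimFactors F q n').ncard) ∧
    (n' = 1 → (scrimFactors F q n').ncard = 1) :=
  stmt6_general hF hn' hr1 hr2
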